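/- arXiv:1101.0495 — 3 statements merged into one kernel-verified Lean document; each statement's English description precedes it below -/
import Mathlib

section
/- Let V be a finite-dimensional complex vector space with a nondegenerate symmetric bilinear form b, and let so(V,b) = {A ∈ gl(V) | b(Ax,y) + b(x,Ay) = 0}. If φ : V → gl(V) is a linear map such that φ(x) ∈ so(V,b) + ℂ·id_V for every x ∈ V and φ(x)y = −φ(y)x for all x,y ∈ V, then φ(x) ∈ so(V,b) for every x. Consequently the first skew-symmetric prolongation of so(V,b) ⊕ ℂ·id_V ⊂ gl(V) equals that of so(V,b). -/
/-!
Write `φ x = A + z • 1` with `A` skew for `b`. Skew-symmetry of the prolongation gives `φ x x = 0`,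
so `0 = b (φ x x) x = z * b x x`, and `z = 0` as soon as `x` is not isotropic
(`skew_of_nonisotropic`). The vectors `x` with `φ x` skew form a subspace, and the non-isotropic
vectors span: if `v` is non-isotropic and `x` is isotropic, then one of `x + v`, `x - v` is
non-isotropic, because `b (x + v) (x + v) + b (x - v) (x - v) = 2 * b v v`. If all vectors are
isotropic, then `b = 0` by polarization and there is nothing to prove.
-/

theorem skew_of_nonisotropic {V : Type*} [AddCommGroup V] [Module ℂ V]
    (b : V →ₗ[ℂ] V →ₗ[ℂ] ℂ) (hsymm : ∀ x y : V, b x y = b y x)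
    (φ : V →ₗ[ℂ] Module.End ℂ V)
    (h : ∀ x : V, ∃ A : Module.End ℂ V, ∃ z : ℂ,
      (∀ u w : V, b (A u) w + b u (A w) = 0) ∧ φ x = A + z • (1 : Module.End ℂ V))
    (hskew : ∀ x y : V, (φ x) y = -((φ y) x)) (x : V) (hx : b x x ≠ 0) (u w : V) :
    b ((φ x) u) w + b u ((φ x) w) = 0 := by
  obtain ⟨A, z, hA, hφ⟩ := h x
  have hAxx : b (A x) x = 0 := by
    have := hA x x
    rw [hsymm x (A x)] at this
    exact add_self_eq_zero.mp this
  have hz : z = 0 := by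
    have h0 : b ((φ x) x) x = 0 := by
      have h1 := congrArg (fun y => b y x) (hskew x x)
      simp only [map_neg, LinearMap.neg_apply] at h1
      exact self_eq_neg.mp h1
    rw [hφ] at h0
    simpa [hAxx, hx] using h0
  simpa [hφ, hz] using hA u w

theorem skew_of_conformal {V : Type*} [AddCommGroup V] [Module ℂ V]
    (b : V →ₗ[ℂ] V →ₗ[ℂ] ℂ) (hsymm : ∀ x y : V, b x y = b y x)
    (φ : V →ₗ[ℂ] Module.End ℂ V)
    (h : ∀ x : V, ∃ A : Module.End ℂ V, ∃ z : ℂ,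
      (∀ u w : V, b (A u) w + b u (A w) = 0) ∧ φ x = A + z • (1 : Module.End ℂ V))
    (hskew : ∀ x y : V, (φ x) y = -((φ y) x)) (x u w : V) :
    b ((φ x) u) w + b u ((φ x) w) = 0 := by
  have key := skew_of_nonisotropic b hsymm φ h hskew
  by_cases hall : ∀ v, b v v = 0
  · have hb : ∀ p q, b p q = 0 := by
      intro p q
      have h1 := hall (p + q)
      simp only [map_add, LinearMap.add_apply, hall, hsymm q p, zero_add, add_zero] at h1
      exact add_self_eq_zero.mp h1
    simp [hb]
  · push Not at hall
    obtain ⟨v, hv⟩ := hall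
    by_cases hx : b x x = 0
    · have hv' := key v hv u w
      by_cases hp : b (x + v) (x + v) = 0
      · have hm : b (x - v) (x - v) ≠ 0 := by
          intro hm
          apply hv
          simp only [map_add, map_sub, LinearMap.add_apply, LinearMap.sub_apply] at hp hm
          linear_combination (hp + hm) / 2 - hx
        have := key _ hm u w
        simp only [map_sub, LinearMap.sub_apply] at this
        linear_combination this + hv'
      · have := key _ hp u w
        simp only [map_add, LinearMap.add_apply] at this
        linear_combination this - hv'
    · exact key x hx u w

/-- if `b` is a nondegenerate symmetric bilinear form on a
finite-dimensional complex vector space `V` and `φ : V → so(V,b) ⊕ ℂ·id` is a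
linear map with `φ(x)y = -φ(y)x`, then `φ` takes values in `so(V,b)`; hence
the first skew-symmetric prolongations of `so(V,b) ⊕ ℂ·id` and of `so(V,b)`
coincide. -/
theorem stmt10 {V : Type*} [AddCommGroup V] [Module ℂ V] [FiniteDimensional ℂ V]
    (b : V →ₗ[ℂ] V →ₗ[ℂ] ℂ)
    (hsymm : ∀ x y : V, b x y = b y x)
    (hnd : ∀ x : V, (∀ y : V, b x y = 0) → x = 0) :
    (∀ φ : V →ₗ[ℂ] Module.End ℂ V,
      (∀ x : V, ∃ A : Module.End ℂ V, ∃ z : ℂ,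
        (∀ u w : V, b (A u) w + b u (A w) = 0) ∧ φ x = A + z • (1 : Module.End ℂ V)) →
      (∀ x y : V, (φ x) y = -((φ y) x)) →
      ∀ x u w : V, b ((φ x) u) w + b u ((φ x) w) = 0) ∧
    ({φ : V →ₗ[ℂ] Module.End ℂ V |
        (∀ x : V, ∃ A : Module.End ℂ V, ∃ z : ℂ,
          (∀ u w : V, b (A u) w + b u (A w) = 0) ∧ φ x = A + z • (1 : Module.End ℂ V)) ∧
        (∀ x y : V, (φ x) y = -((φ y) x))} =
      {φ : V →ₗ[ℂ] Module.End ℂ V |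
        (∀ x : V, ∀ u w : V, b ((φ x) u) w + b u ((φ x) w) = 0) ∧
        (∀ x y : V, (φ x) y = -((φ y) x))}) := by
  refine ⟨fun φ h hskew => skew_of_conformal b hsymm φ h hskew, ?_⟩
  ext φ
  constructor
  · rintro ⟨h, hskew⟩
    exact ⟨skew_of_conformal b hsymm φ h hskew, hskew⟩
  · rintro ⟨h, hskew⟩
    exact ⟨fun x => ⟨φ x, 0, h x, by simp⟩, hskew⟩
end

section
/- Let W = ℂⁿ with n ≥ 2, set V = W ⊕ W*, and let g = {A ⊕ (−A*) : A ∈ gl(W)} ⊂ gl(V), where A* denotes the dual map on W* (this is gl(n,ℂ) acting diagonally on W ⊕ W*, and g lies in sp(V,ω) for the canonical symplectic form ω((x,φ),(y,ψ)) = φ(y) − ψ(x)). Then every R ∈ R̄(g) satisfies R(x,y) = 0 for x,y ∈ W and R(φ,ψ) = 0 for φ,ψ ∈ W*, and the assignment sending R to the 4-linear form T(x, y, φ, ψ) := φ(R(x,ψ)y) (x,y ∈ W, φ,ψ ∈ W*, where R(x,ψ)y denotes the W-component of the value of R(x,ψ) on y ∈ W) is a linear isomorphism from R̄(g) onto the space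 of 4-linear forms on W × W × W* × W* that are alternating in the first two arguments and alternating in the last two arguments; in particular dim_ℂ R̄(g) = (n(n−1)/2)². -/
/-!
Elements of `g` preserve `W` and `W*`, and such an element is determined by its restriction to
either summand. Take `R ∈ R̄(g)`. In the Bianchi identity for `x, y ∈ W`, `ψ ∈ W*` the
`W*`-component is `R(x,y)ψ = 0`, so `R(x,y) = 0` (`curv_vec_vec`), and the `W`-component says
that `R(x,ψ)y` is skew in `x, y`. Symmetrically, the identity for `x, φ, ψ` gives `R(φ,ψ) = 0`
(`curv_dual_dual`) and says that `R(x,ψ)φ` is skew in `φ, ψ`. Hence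
`T(x,y,φ,ψ) = φ(R(x,ψ)y) = -(R(x,ψ)φ)(y)` is alternating in both pairs (`curvForm_mem`), and `T`
determines `R`, since only the values `R(x,ψ)` can be nonzero (`curvFormHom_injective`).

Conversely, as `W` is reflexive, `T(x, ·, ·, ψ)` comes from an endomorphism of `W`; putting the
corresponding element of `g` as `R(x,ψ) = R(ψ,x)` and zero on `W × W` and `W* × W*` gives an
element of `R̄(g)`, the Bianchi identity being the skewness of `T` in its two pairs
(`formCurv_mem`).

For the dimension, a form alternating in both pairs is freely determined by its values on
`(bᵢ, bⱼ, βₖ, βₗ)` with `i < j` and `k < l`, where `b` is a basis of `W` and `β` one of `W*`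
(`formCoord_injective`, `formCoord_surjective`).
-/

open Module

variable {W : Type*} [AddCommGroup W] [Module ℂ W]

-- instance ladder to keep typeclass search on the deeply nested types tractable
noncomputable local instance i1a : AddCommGroup (Module.End ℂ (W × Dual ℂ W)) := inferInstance
noncomputable local instance i1b : Module ℂ (Module.End ℂ (W × Dual ℂ W)) := inferInstance
noncomputable local instance i1c : SMulCommClass ℂ ℂ (Module.End ℂ (W × Dual ℂ W)) := inferInstance
noncomputable local instance i2a : AddCommGroup ((W × Dual ℂ W) →ₗ[ℂ] Module.End ℂ (W × Dual ℂ W)) := inferInstance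
noncomputable local instance i2b : Module ℂ ((W × Dual ℂ W) →ₗ[ℂ] Module.End ℂ (W × Dual ℂ W)) := inferInstance
noncomputable local instance i2c : SMulCommClass ℂ ℂ ((W × Dual ℂ W) →ₗ[ℂ] Module.End ℂ (W × Dual ℂ W)) := inferInstance
noncomputable local instance i3a : AddCommGroup ((W × Dual ℂ W) →ₗ[ℂ] (W × Dual ℂ W) →ₗ[ℂ] Module.End ℂ (W × Dual ℂ W)) := inferInstance
noncomputable local instance i3b : Module ℂ ((W × Dual ℂ W) →ₗ[ℂ] (W × Dual ℂ W) →ₗ[ℂ] Module.End ℂ (W × Dual ℂ W)) := inferInstance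
noncomputable local instance q1a : AddCommGroup (Dual ℂ W →ₗ[ℂ] ℂ) := inferInstance
noncomputable local instance q1b : Module ℂ (Dual ℂ W →ₗ[ℂ] ℂ) := inferInstance
noncomputable local instance q1c : SMulCommClass ℂ ℂ (Dual ℂ W →ₗ[ℂ] ℂ) := inferInstance
noncomputable local instance q2a : AddCommGroup (Dual ℂ W →ₗ[ℂ] Dual ℂ W →ₗ[ℂ] ℂ) := inferInstance
noncomputable local instance q2b : Module ℂ (Dual ℂ W →ₗ[ℂ] Dual ℂ W →ₗ[ℂ] ℂ) := inferInstance
noncomputable local instance q2c : SMulCommClass ℂ ℂ (Dual ℂ W →ₗ[ℂ] Dual ℂ W →ₗ[ℂ] ℂ) := inferInstance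
noncomputable local instance q3a : AddCommGroup (W →ₗ[ℂ] Dual ℂ W →ₗ[ℂ] Dual ℂ W →ₗ[ℂ] ℂ) := inferInstance
noncomputable local instance q3b : Module ℂ (W →ₗ[ℂ] Dual ℂ W →ₗ[ℂ] Dual ℂ W →ₗ[ℂ] ℂ) := inferInstance
noncomputable local instance q3c : SMulCommClass ℂ ℂ (W →ₗ[ℂ] Dual ℂ W →ₗ[ℂ] Dual ℂ W →ₗ[ℂ] ℂ) := inferInstance
noncomputable local instance q4a : AddCommGroup (W →ₗ[ℂ] W →ₗ[ℂ] Dual ℂ W →ₗ[ℂ] Dual ℂ W →ₗ[ℂ] ℂ) := inferInstance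
noncomputable local instance q4b : Module ℂ (W →ₗ[ℂ] W →ₗ[ℂ] Dual ℂ W →ₗ[ℂ] Dual ℂ W →ₗ[ℂ] ℂ) := inferInstance

/-- `gl(W)` embedded diagonally in `gl(W ⊕ W*)` by `A ↦ A ⊕ (−A*)`
(`A*` is the dual map). -/
noncomputable def glDiagEmb :
    Module.End ℂ W →ₗ[ℂ] Module.End ℂ (W × Module.Dual ℂ W) where
  toFun A := A.prodMap (-(Module.Dual.transpose A))
  map_add' A B := by
    apply LinearMap.ext; rintro ⟨x, φ⟩
    simp [Prod.ext_iff]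
    abel
  map_smul' c A := by
    apply LinearMap.ext; rintro ⟨x, φ⟩
    simp [Prod.ext_iff]

/-- `g = gl(W)` acting diagonally on `W ⊕ W*`: the set `{A ⊕ (−A*)}`. -/
noncomputable def glDiag : Submodule ℂ (Module.End ℂ (W × Module.Dual ℂ W)) :=
  LinearMap.range (glDiagEmb (W := W))

/-- The space `R̄(g)` of symmetric curvature tensors of type
`g = gl(W) ⊂ gl(W ⊕ W*)`: symmetric bilinear maps with values in `g`
satisfying the first Bianchi identity. -/
noncomputable def glDiagCurv :
    Submodule ℂ ((W × Module.Dual ℂ W) →ₗ[ℂ] (W × Module.Dual ℂ W) →ₗ[ℂ]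
      Module.End ℂ (W × Module.Dual ℂ W)) where
  carrier := {R | (∀ x y, R x y = R y x) ∧ (∀ x y, R x y ∈ glDiag) ∧
    (∀ x y z, R x y z + R y z x + R z x y = 0)}
  add_mem' := by
    rintro R S ⟨hs1, hm1, hb1⟩ ⟨hs2, hm2, hb2⟩
    refine ⟨fun x y => by simp [hs1 x y, hs2 x y],
      fun x y => add_mem (hm1 x y) (hm2 x y), fun x y z => ?_⟩
    simp only [LinearMap.add_apply]
    rw [show ∀ a b c d e f : W × Module.Dual ℂ W,
      a + b + (c + d) + (e + f) = (a + c + e) + (b + d + f) from by intros; abel,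
      hb1 x y z, hb2 x y z, add_zero]
  zero_mem' := ⟨fun x y => rfl, fun x y => zero_mem _, fun x y z => by simp⟩
  smul_mem' := by
    rintro c R ⟨hs, hm, hb⟩
    refine ⟨fun x y => by simp [hs x y],
      fun x y => Submodule.smul_mem _ _ (hm x y), fun x y z => ?_⟩
    simp only [LinearMap.smul_apply]
    rw [← smul_add, ← smul_add, hb x y z, smul_zero]

/-- The space of 4-linear forms on `W × W × W* × W*` alternating in the first
two and in the last two arguments. -/
noncomputable def quadForms : Submodule ℂ (W →ₗ[ℂ] W →ₗ[ℂ]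
    Module.Dual ℂ W →ₗ[ℂ] Module.Dual ℂ W →ₗ[ℂ] ℂ) where
  carrier := {T | (∀ x φ ψ, T x x φ ψ = 0) ∧ (∀ x y φ, T x y φ φ = 0)}
  add_mem' := by
    rintro T S ⟨h1, h2⟩ ⟨h3, h4⟩
    exact ⟨fun x φ ψ => by simp [h1 x φ ψ, h3 x φ ψ],
      fun x y φ => by simp [h2 x y φ, h4 x y φ]⟩
  zero_mem' := ⟨fun _ _ _ => rfl, fun _ _ _ => rfl⟩
  smul_mem' := by
    rintro c T ⟨h1, h2⟩
    exact ⟨fun x φ ψ => by simp [h1 x φ ψ], fun x y φ => by simp [h2 x y φ]⟩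

/-! ### Elements of `R̄(g)` -/

theorem glDiagEmb_apply (A : Module.End ℂ W) (p : W × Dual ℂ W) :
    glDiagEmb A p = (A p.1, -(p.2 ∘ₗ A)) := rfl

theorem eq_of_forall_dual {w w' : W} (h : ∀ φ : Dual ℂ W, φ w = φ w') : w = w' := by
  rw [← sub_eq_zero, ← Module.forall_dual_apply_eq_zero_iff ℂ]
  intro φ
  rw [map_sub, h, sub_self]

/-- An element of `g` that kills `W*` is zero, because the functionals on `W` separate points. -/
theorem glDiag_eq_zero_of_dual {B : Module.End ℂ (W × Dual ℂ W)} (hB : B ∈ glDiag)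
    (h : ∀ φ, (B (0, φ)).2 = 0) : B = 0 := by
  obtain ⟨A, rfl⟩ := hB
  have : A = 0 := by
    ext w
    refine eq_of_forall_dual fun φ => ?_
    have := LinearMap.congr_fun (h φ) w
    simpa [glDiagEmb_apply] using this
  rw [this, map_zero]

theorem glDiag_eq_zero_of_vec {B : Module.End ℂ (W × Dual ℂ W)} (hB : B ∈ glDiag)
    (h : ∀ x, (B (x, 0)).1 = 0) : B = 0 := by
  obtain ⟨A, rfl⟩ := hB
  have : A = 0 := by
    ext w
    simpa [glDiagEmb_apply] using h w
  rw [this, map_zero]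

theorem glDiag_fst {B : Module.End ℂ (W × Dual ℂ W)} (hB : B ∈ glDiag) (φ : Dual ℂ W) :
    (B (0, φ)).1 = 0 := by
  obtain ⟨A, rfl⟩ := hB
  simp [glDiagEmb_apply]

theorem glDiag_snd {B : Module.End ℂ (W × Dual ℂ W)} (hB : B ∈ glDiag) (x : W) :
    (B (x, 0)).2 = 0 := by
  obtain ⟨A, rfl⟩ := hB
  simp [glDiagEmb_apply]

theorem glDiag_skew {B : Module.End ℂ (W × Dual ℂ W)} (hB : B ∈ glDiag) (φ : Dual ℂ W)
    (x : W) : (B (0, φ)).2 x = -φ (B (x, 0)).1 := by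
  obtain ⟨A, rfl⟩ := hB
  simp [glDiagEmb_apply]

/-- In the Bianchi identity for `x, y, ψ` the term `R(x,y)ψ` is the only one with a
`W*`-component. -/
theorem curv_vec_vec (R : glDiagCurv (W := W)) (x y : W) : R.1 (x, 0) (y, 0) = 0 := by
  obtain ⟨R, -, hm, hb⟩ := R
  refine glDiag_eq_zero_of_dual (hm _ _) fun ψ => ?_
  have := congrArg Prod.snd (hb (x, 0) (y, 0) (0, ψ))
  simpa [glDiag_snd (hm _ _)] using this

theorem curv_dual_dual (R : glDiagCurv (W := W)) (φ ψ : Dual ℂ W) :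
    R.1 (0, φ) (0, ψ) = 0 := by
  obtain ⟨R, -, hm, hb⟩ := R
  refine glDiag_eq_zero_of_vec (hm _ _) fun x => ?_
  have := congrArg Prod.fst (hb (0, φ) (0, ψ) (x, 0))
  simpa [glDiag_fst (hm _ _)] using this

/-! ### The map to 4-linear forms -/

/-- The form `T(x, y, φ, ψ) = φ(R(x,ψ)y)` attached to a bilinear map `R` with values in
`gl(W ⊕ W*)`. -/
noncomputable def curvForm
    (R : (W × Dual ℂ W) →ₗ[ℂ] (W × Dual ℂ W) →ₗ[ℂ] Module.End ℂ (W × Dual ℂ W)) :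
    W →ₗ[ℂ] W →ₗ[ℂ] Dual ℂ W →ₗ[ℂ] Dual ℂ W →ₗ[ℂ] ℂ :=
  LinearMap.mk₂ ℂ
    (fun x y => LinearMap.mk₂ ℂ
      (fun φ ψ => φ (R (LinearMap.inl ℂ _ _ x) (LinearMap.inr ℂ _ _ ψ)
        (LinearMap.inl ℂ _ _ y)).1)
      (fun _ _ _ => by simp only [LinearMap.add_apply])
      (fun _ _ _ => by simp only [LinearMap.smul_apply])
      (fun _ _ _ => by simp only [map_add, LinearMap.add_apply, Prod.fst_add])
      (fun _ _ _ => by simp only [map_smul, LinearMap.smul_apply, Prod.smul_fst]))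
    (fun _ _ _ => LinearMap.ext₂ fun _ _ => by
      simp only [map_add, LinearMap.add_apply, Prod.fst_add, LinearMap.mk₂_apply])
    (fun _ _ _ => LinearMap.ext₂ fun _ _ => by
      simp only [map_smul, LinearMap.smul_apply, Prod.smul_fst, LinearMap.mk₂_apply])
    (fun _ _ _ => LinearMap.ext₂ fun _ _ => by
      simp only [map_add, LinearMap.add_apply, Prod.fst_add, LinearMap.mk₂_apply])
    (fun _ _ _ => LinearMap.ext₂ fun _ _ => by
      simp only [map_smul, LinearMap.smul_apply, Prod.smul_fst, LinearMap.mk₂_apply])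

theorem curvForm_apply
    (R : (W × Dual ℂ W) →ₗ[ℂ] (W × Dual ℂ W) →ₗ[ℂ] Module.End ℂ (W × Dual ℂ W))
    (x y : W) (φ ψ : Dual ℂ W) :
    curvForm R x y φ ψ = φ (R (x, 0) (0, ψ) (y, 0)).1 := rfl

theorem curvForm_mem (R : glDiagCurv (W := W)) : curvForm R.1 ∈ quadForms (W := W) := by
  have hxx := curv_vec_vec R
  have hφφ := curv_dual_dual R
  obtain ⟨R, hs, hm, hb⟩ := R
  constructor
  · intro x φ ψ
    have := congrArg (fun p => φ p.1) (hb (x, 0) (0, ψ) (x, 0))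
    simp only [hs (0, ψ) (x, 0), hxx, LinearMap.zero_apply, add_zero, Prod.fst_add, map_add,
      Prod.fst_zero, map_zero] at this
    rw [curvForm_apply]
    exact self_eq_neg.mp (eq_neg_of_add_eq_zero_left this)
  · intro x y φ
    have := congrArg (fun p => p.2 y) (hb (x, 0) (0, φ) (0, φ))
    simp only [hs (0, φ) (x, 0), hφφ, LinearMap.zero_apply, add_zero, Prod.snd_add,
      LinearMap.add_apply, Prod.snd_zero, glDiag_skew (hm _ _)] at this
    rw [curvForm_apply]
    linear_combination (-1 / 2 : ℂ) * this

/-- `R ↦ T` as a linear map from `R̄(g)` to `quadForms`. -/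
noncomputable def curvFormHom : glDiagCurv (W := W) →ₗ[ℂ] quadForms (W := W) where
  toFun R := ⟨curvForm R.1, curvForm_mem R⟩
  map_add' R S := by
    apply Subtype.ext
    refine LinearMap.ext₂ fun x y => LinearMap.ext₂ fun φ ψ => ?_
    simp [curvForm_apply]
  map_smul' c R := by
    apply Subtype.ext
    refine LinearMap.ext₂ fun x y => LinearMap.ext₂ fun φ ψ => ?_
    simp [curvForm_apply]

theorem curvFormHom_injective : Function.Injective (curvFormHom (W := W)) := by
  rw [← LinearMap.ker_eq_bot, LinearMap.ker_eq_bot']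
  intro R hR
  have hT : ∀ (x y : W) (φ ψ : Dual ℂ W), φ (R.1 (x, 0) (0, ψ) (y, 0)).1 = 0 := fun x y φ ψ => by
    rw [← curvForm_apply, show curvForm R.1 = 0 from congrArg Subtype.val hR]
    rfl
  have hxx := curv_vec_vec R
  have hφφ := curv_dual_dual R
  obtain ⟨R, hs, hm, hb⟩ := R
  have hxψ : ∀ x ψ, R (x, 0) (0, ψ) = 0 := fun x ψ =>
    glDiag_eq_zero_of_vec (hm _ _) fun y =>
      (Module.forall_dual_apply_eq_zero_iff ℂ _).mp fun φ => hT x y φ ψ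
  apply Subtype.ext
  refine LinearMap.ext₂ fun p q => ?_
  have hp : p = (p.1, 0) + (0, p.2) := by simp
  have hq : q = (q.1, 0) + (0, q.2) := by simp
  rw [hp, hq]
  simp only [map_add, LinearMap.add_apply, hxx, hφφ, hxψ, hs (0, p.2) (q.1, 0)]
  simp

/-! ### Reconstructing the curvature tensor -/

theorem quadForms_swap_left {T : W →ₗ[ℂ] W →ₗ[ℂ] Dual ℂ W →ₗ[ℂ] Dual ℂ W →ₗ[ℂ] ℂ}
    (hT : T ∈ quadForms (W := W)) (x y : W) (φ ψ : Dual ℂ W) :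
    T x y φ ψ = -T y x φ ψ := by
  have := hT.1 (x + y) φ ψ
  simp only [map_add, LinearMap.add_apply, hT.1] at this
  linear_combination this

theorem quadForms_swap_right {T : W →ₗ[ℂ] W →ₗ[ℂ] Dual ℂ W →ₗ[ℂ] Dual ℂ W →ₗ[ℂ] ℂ}
    (hT : T ∈ quadForms (W := W)) (x y : W) (φ ψ : Dual ℂ W) :
    T x y φ ψ = -T x y ψ φ := by
  have := hT.2 x y (φ + ψ)
  simp only [map_add, LinearMap.add_apply, hT.2] at this
  linear_combination this

section Inverse

variable [FiniteDimensional ℂ W]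

/-- The endomorphism `A` of `W` with `φ(A y) = T(x, y, φ, ψ)`, obtained from the
identification `W ≃ W**`. -/
noncomputable def formEnd (T : W →ₗ[ℂ] W →ₗ[ℂ] Dual ℂ W →ₗ[ℂ] Dual ℂ W →ₗ[ℂ] ℂ)
    (x : W) (ψ : Dual ℂ W) : Module.End ℂ W where
  toFun y := (evalEquiv ℂ W).symm ((T x y).flip ψ)
  map_add' y z := by
    rw [← map_add]
    congr 1
    ext φ
    simp
  map_smul' c y := by
    rw [RingHom.id_apply, ← map_smul]
    congr 1
    ext φ
    simp

theorem dual_formEnd (T : W →ₗ[ℂ] W →ₗ[ℂ] Dual ℂ W →ₗ[ℂ] Dual ℂ W →ₗ[ℂ] ℂ)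
    (x y : W) (φ ψ : Dual ℂ W) : φ (formEnd T x ψ y) = T x y φ ψ := by
  simp [formEnd]

/-- The symmetric bilinear map `R` with `R(x,ψ) = R(ψ,x)` the element of `g` determined by
`T(x, ·, ·, ψ)` and with `R(x,y) = 0`, `R(φ,ψ) = 0`. -/
noncomputable def formCurv (T : W →ₗ[ℂ] W →ₗ[ℂ] Dual ℂ W →ₗ[ℂ] Dual ℂ W →ₗ[ℂ] ℂ) :
    (W × Dual ℂ W) →ₗ[ℂ] (W × Dual ℂ W) →ₗ[ℂ] Module.End ℂ (W × Dual ℂ W) :=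
  LinearMap.mk₂ ℂ (fun p q => glDiagEmb (formEnd T p.1 q.2 + formEnd T q.1 p.2))
    (fun p p' q => by
      rw [← map_add]
      congr 1
      refine LinearMap.ext fun y => eq_of_forall_dual fun φ => ?_
      simp only [LinearMap.add_apply, map_add, dual_formEnd, Prod.fst_add, Prod.snd_add]
      ring)
    (fun c p q => by
      rw [← map_smul]
      congr 1
      refine LinearMap.ext fun y => eq_of_forall_dual fun φ => ?_
      simp only [LinearMap.add_apply, LinearMap.smul_apply, map_add, map_smul, dual_formEnd,
        Prod.smul_fst, Prod.smul_snd, smul_add])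
    (fun p q q' => by
      rw [← map_add]
      congr 1
      refine LinearMap.ext fun y => eq_of_forall_dual fun φ => ?_
      simp only [LinearMap.add_apply, map_add, dual_formEnd, Prod.fst_add, Prod.snd_add]
      ring)
    (fun c p q => by
      rw [← map_smul]
      congr 1
      refine LinearMap.ext fun y => eq_of_forall_dual fun φ => ?_
      simp only [LinearMap.add_apply, LinearMap.smul_apply, map_add, map_smul, dual_formEnd,
        Prod.smul_fst, Prod.smul_snd, smul_add])

theorem formCurv_apply (T : W →ₗ[ℂ] W →ₗ[ℂ] Dual ℂ W →ₗ[ℂ] Dual ℂ W →ₗ[ℂ] ℂ)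
    (p q : W × Dual ℂ W) :
    formCurv T p q = glDiagEmb (formEnd T p.1 q.2 + formEnd T q.1 p.2) := rfl

theorem formCurv_mem {T : W →ₗ[ℂ] W →ₗ[ℂ] Dual ℂ W →ₗ[ℂ] Dual ℂ W →ₗ[ℂ] ℂ}
    (hT : T ∈ quadForms (W := W)) : formCurv T ∈ glDiagCurv (W := W) := by
  refine ⟨fun p q => ?_, fun p q => ⟨_, rfl⟩, fun p q r => Prod.ext ?_ ?_⟩
  · rw [formCurv_apply, formCurv_apply, add_comm]
  · refine eq_of_forall_dual fun φ => ?_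
    simp only [formCurv_apply, glDiagEmb_apply, Prod.fst_add, LinearMap.add_apply, map_add,
      dual_formEnd, Prod.fst_zero, map_zero]
    linear_combination quadForms_swap_left hT p.1 r.1 φ q.2 +
      quadForms_swap_left hT q.1 r.1 φ p.2 + quadForms_swap_left hT p.1 q.1 φ r.2
  · refine LinearMap.ext fun y => ?_
    simp only [formCurv_apply, glDiagEmb_apply, Prod.snd_add, LinearMap.add_apply, map_add,
      dual_formEnd, Prod.snd_zero, LinearMap.zero_apply, LinearMap.neg_apply,
      LinearMap.comp_apply]
    linear_combination -quadForms_swap_right hT p.1 y r.2 q.2 -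
      quadForms_swap_right hT q.1 y r.2 p.2 - quadForms_swap_right hT r.1 y p.2 q.2

theorem curvFormHom_surjective : Function.Surjective (curvFormHom (W := W)) := by
  rintro ⟨T, hT⟩
  refine ⟨⟨formCurv T, formCurv_mem hT⟩, Subtype.ext ?_⟩
  refine LinearMap.ext₂ fun x y => LinearMap.ext₂ fun φ ψ => ?_
  change φ (formCurv T (x, 0) (0, ψ) (y, 0)).1 = T x y φ ψ
  have h0 : T 0 y φ 0 = 0 := by simp
  rw [formCurv_apply, glDiagEmb_apply]
  simp only [LinearMap.add_apply, map_add φ, dual_formEnd, h0, add_zero]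

end Inverse

/-! ### The dimension of the space of forms -/

section Dimension

/-- The pairs `i < j` in `Fin n`, encoded as `⟨j, i⟩`. -/
abbrev LtPair (n : ℕ) : Type := Σ j : Fin n, Fin j

namespace LtPair

variable {n : ℕ}

/-- The smaller entry of the pair. -/
def lo (p : LtPair n) : Fin n := ⟨p.2, p.2.2.trans p.1.2⟩

/-- The larger entry of the pair. -/
def hi (p : LtPair n) : Fin n := p.1

theorem lo_lt_hi (p : LtPair n) : p.lo < p.hi := p.2.2

theorem exists_of_lt {i j : Fin n} (h : i < j) : ∃ p : LtPair n, p.lo = i ∧ p.hi = j :=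
  ⟨⟨j, ⟨i, h⟩⟩, rfl, rfl⟩

theorem ext_lo_hi {p q : LtPair n} (h₁ : p.lo = q.lo) (h₂ : p.hi = q.hi) : p = q := by
  obtain ⟨j, i⟩ := p
  obtain ⟨l, k⟩ := q
  obtain rfl : j = l := h₂
  have : i = k := Fin.ext (Fin.mk.inj h₁)
  rw [this]

theorem card_eq : Fintype.card (LtPair n) = n * (n - 1) / 2 := by
  rw [Fintype.card_sigma, ← Finset.sum_range_id, ← Fin.sum_univ_eq_sum_range]
  simp

end LtPair

/-- The alternating form `(x, y) ↦ f(x) g(y) − g(x) f(y)`. -/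
noncomputable def wedge {M : Type*} [AddCommGroup M] [Module ℂ M] (f g : M →ₗ[ℂ] ℂ) :
    M →ₗ[ℂ] M →ₗ[ℂ] ℂ :=
  LinearMap.mk₂ ℂ (fun x y => f x * g y - g x * f y)
    (fun _ _ _ => by simp only [map_add]; ring)
    (fun _ _ _ => by simp only [map_smul, smul_eq_mul]; ring)
    (fun _ _ _ => by simp only [map_add]; ring)
    (fun _ _ _ => by simp only [map_smul, smul_eq_mul]; ring)

theorem wedge_apply {M : Type*} [AddCommGroup M] [Module ℂ M] (f g : M →ₗ[ℂ] ℂ) (x y : M) :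
    wedge f g x y = f x * g y - g x * f y := rfl

/-- The wedges of the coordinate functionals are dual to the pairs of basis vectors. -/
theorem wedge_coord {M : Type*} [AddCommGroup M] [Module ℂ M] {n : ℕ}
    (b : Basis (Fin n) ℂ M) (p q : LtPair n) :
    wedge (b.coord p.lo) (b.coord p.hi) (b q.lo) (b q.hi) = if p = q then 1 else 0 := by
  have hp := p.lo_lt_hi
  have hq := q.lo_lt_hi
  simp only [wedge_apply, Basis.coord_apply, Basis.repr_self, Finsupp.single_apply]
  by_cases h : p = q
  · subst h
    simp [hp.ne, hp.ne']
  · have h1 : ¬(q.lo = p.lo ∧ q.hi = p.hi) := fun h' =>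
      h (LtPair.ext_lo_hi h'.1.symm h'.2.symm)
    have h2 : ¬(q.lo = p.hi ∧ q.hi = p.lo) := fun h' => by
      rw [h'.1, h'.2] at hq
      exact absurd hp hq.asymm
    rw [if_neg h]
    grind

/-- The values of a form on the pairs `i < j` of vectors of a basis of `W` and the pairs
`k < l` of vectors of a basis of `W*`. -/
noncomputable def formCoord {n : ℕ} (b : Basis (Fin n) ℂ W) (b' : Basis (Fin n) ℂ (Dual ℂ W)) :
    quadForms (W := W) →ₗ[ℂ] (LtPair n × LtPair n → ℂ) where
  toFun T p := T.1 (b p.1.lo) (b p.1.hi) (b' p.2.lo) (b' p.2.hi)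
  map_add' _ _ := rfl
  map_smul' _ _ := rfl

theorem formCoord_injective {n : ℕ} (b : Basis (Fin n) ℂ W)
    (b' : Basis (Fin n) ℂ (Dual ℂ W)) : Function.Injective (formCoord b b') := by
  rw [← LinearMap.ker_eq_bot, LinearMap.ker_eq_bot']
  rintro ⟨T, hT⟩ h
  have h0 : ∀ p q : LtPair n, T (b p.lo) (b p.hi) (b' q.lo) (b' q.hi) = 0 := fun p q =>
    congrFun h (p, q)
  have h1 : ∀ (p : LtPair n) k l, T (b p.lo) (b p.hi) (b' k) (b' l) = 0 := fun p k l => by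
    rcases lt_trichotomy k l with hkl | rfl | hkl
    · obtain ⟨q, rfl, rfl⟩ := LtPair.exists_of_lt hkl
      exact h0 p q
    · exact hT.2 _ _ _
    · obtain ⟨q, rfl, rfl⟩ := LtPair.exists_of_lt hkl
      rw [quadForms_swap_right hT, h0 p q, neg_zero]
  have h2 : ∀ i j k l, T (b i) (b j) (b' k) (b' l) = 0 := fun i j k l => by
    rcases lt_trichotomy i j with hij | rfl | hij
    · obtain ⟨p, rfl, rfl⟩ := LtPair.exists_of_lt hij
      exact h1 p k l
    · exact hT.1 _ _ _
    · obtain ⟨p, rfl, rfl⟩ := LtPair.exists_of_lt hij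
      rw [quadForms_swap_left hT, h1 p k l, neg_zero]
  apply Subtype.ext
  exact b.ext fun i => b.ext fun j => b'.ext fun k => b'.ext fun l => h2 i j k l

theorem formCoord_surjective {n : ℕ} (b : Basis (Fin n) ℂ W)
    (b' : Basis (Fin n) ℂ (Dual ℂ W)) : Function.Surjective (formCoord b b') := by
  intro c
  -- The linear map `z ↦ z • g` turns a bilinear form `f` on `W` into the form `f ⊗ g`.
  let G : LtPair n → Dual ℂ W →ₗ[ℂ] Dual ℂ W →ₗ[ℂ] ℂ := fun p =>
    ∑ q, c (p, q) • wedge (b'.coord q.lo) (b'.coord q.hi)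
  let T : W →ₗ[ℂ] W →ₗ[ℂ] Dual ℂ W →ₗ[ℂ] Dual ℂ W →ₗ[ℂ] ℂ :=
    ∑ p, (wedge (b.coord p.lo) (b.coord p.hi)).compr₂ (LinearMap.toSpanSingleton ℂ _ (G p))
  have hT : ∀ x y φ ψ, T x y φ ψ = ∑ p, wedge (b.coord p.lo) (b.coord p.hi) x y *
      ∑ q, c (p, q) * wedge (b'.coord q.lo) (b'.coord q.hi) φ ψ := fun x y φ ψ => by
    simp [T, G, LinearMap.sum_apply]
  refine ⟨⟨T, fun x φ ψ => ?_, fun x y φ => ?_⟩, ?_⟩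
  · rw [hT]
    simp [wedge_apply, mul_comm]
  · rw [hT]
    simp [wedge_apply, mul_comm]
  · ext ⟨p, q⟩
    change T (b p.lo) (b p.hi) (b' q.lo) (b' q.hi) = c (p, q)
    rw [hT]
    simp [wedge_coord]

theorem finrank_quadForms [FiniteDimensional ℂ W] :
    finrank ℂ (quadForms (W := W)) = (finrank ℂ W * (finrank ℂ W - 1) / 2) ^ 2 := by
  have b := finBasis ℂ W
  have e := LinearEquiv.ofBijective (formCoord b b.dualBasis)
    ⟨formCoord_injective b b.dualBasis, formCoord_surjective b b.dualBasis⟩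
  rw [e.finrank_eq, finrank_fintype_fun_eq_card, Fintype.card_prod, LtPair.card_eq, sq]

end Dimension

/-- for `g = gl(n,ℂ)` acting diagonally on `V = W ⊕ W*`
(`W = ℂⁿ`, `n ≥ 2`; `g` lies in `sp(V,ω)` for the canonical symplectic form
`ω((x,φ),(y,ψ)) = φ(y) − ψ(x)`), every `R ∈ R̄(g)` vanishes on `W × W` and on
`W* × W*`, and `R ↦ T`, `T(x,y,φ,ψ) = φ(R(x,ψ)y)` (`W`-component), is a
linear isomorphism from `R̄(g)` onto the space of 4-linear forms on
`W × W × W* × W*` alternating in the first two and in the last two arguments;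
in particular `dim_ℂ R̄(g) = (n(n−1)/2)²`. -/
theorem stmt15 (n : ℕ) (hn : 2 ≤ n) [FiniteDimensional ℂ W]
    (hdim : Module.finrank ℂ W = n) :
    (∀ B ∈ glDiag (W := W), ∀ p q : W × Module.Dual ℂ W,
      ((B p).2 q.1 - q.2 (B p).1) + (p.2 (B q).1 - (B q).2 p.1) = 0) ∧
    (∀ R : glDiagCurv (W := W),
      (∀ x y : W, R.1 (x, 0) (y, 0) = 0) ∧
      (∀ φ ψ : Module.Dual ℂ W, R.1 (0, φ) (0, ψ) = 0)) ∧
    (∃ e : glDiagCurv (W := W) ≃ₗ[ℂ] quadForms (W := W),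
      ∀ (R : glDiagCurv (W := W)) (x y : W) (φ ψ : Module.Dual ℂ W),
        (e R).1 x y φ ψ = φ ((R.1 (x, 0) (0, ψ) (y, 0)).1)) ∧
    Module.finrank ℂ ↥(glDiagCurv (W := W)) = (n * (n - 1) / 2) ^ 2 := by
  let e := LinearEquiv.ofBijective (curvFormHom (W := W))
    ⟨curvFormHom_injective, curvFormHom_surjective⟩
  refine ⟨?_, fun R => ⟨curv_vec_vec R, curv_dual_dual R⟩, ⟨e, fun _ _ _ _ _ => rfl⟩, ?_⟩
  · rintro _ ⟨A, rfl⟩ p q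
    simp only [glDiagEmb_apply, LinearMap.neg_apply, LinearMap.comp_apply]
    ring
  · rw [e.finrank_eq, finrank_quadForms, hdim]
end

section
/- Let n ≥ 3 and q ≥ 2, and let g = so(n,ℂ) ⊕ sp(2q,ℂ) act on V = ℂⁿ ⊗ ℂ^{2q} by (A,B)·(x ⊗ y) = Ax ⊗ y + x ⊗ By, where so(n,ℂ) is the Lie algebra of the standard nondegenerate symmetric bilinear form on ℂⁿ and sp(2q,ℂ) that of the standard symplectic form on ℂ^{2q}. Then the space R̄(g) is one-dimensional, and the natural action of g on R̄(g), given by (A·R)(x,y) = [A, R(x,y)] − R(Ax,y) − R(x,Ay), is trivial. -/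
/-!
The space `R̄(g)` is spanned by the tensor
`R₀(u₁ ⊗ p₁, u₂ ⊗ p₂) = ω(p₁,p₂) (u₁ ∧ u₂) - b(u₁,u₂) (p₁ ∘ p₂)`, where
`(u ∧ v) w = b(u,w) v - b(v,w) u` and `(p ∘ r) s = ω(p,s) r + ω(r,s) p`. It satisfies the Bianchi
identity by a direct computation on pure tensors, and it is `g`-invariant since it is built from the
invariant forms `b` and `ω`.

Conversely, `so(U) ⊕ sp(Q)` embeds into `gl(U ⊗ Q)`, so any curvature tensor splits as
`R = A ⊗ id + id ⊗ B` with bilinear `A`, `B`. Write `A₁₂ = A(u₁ ⊗ p₁, u₂ ⊗ p₂)`, and so on. The Bianchi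
identity is contracted with functionals on `Q` killing `p₁, p₂`, or on `U` killing `u₁, u₂`.

* A contraction along a hyperbolic pair orthogonal to `p₁, p₂`, together with the skewness of `B`,
  shows that the image of `A₁₂` lies in the span of `u₁, u₂` (`IsCurvPair.imageA`); as `dim U ≥ 3`, the
  image of `B₁₂` then lies in the span of `p₁, p₂` (`IsCurvPair.imageB`).
* If `ω(p₁,p₂) = 0`, then the image of `A₁₂` lies in a line, and a skew endomorphism of rank at most
  one of an orthogonal space is zero (`IsCurvPair.A_eq_zero`). So `A₁₂ = ω(p₁,p₂) S(u₁,u₂)`.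
* A contraction over two orthogonal hyperbolic pairs gives `S(u₁,u₂) u₃ = β(u₂,u₃) u₁ + γ(u₃,u₁) u₂`
  with bilinear `β`, `γ`; skewness makes both multiples of `b`, so `S(u₁,u₂) = k (u₁ ∧ u₂)`
  (`IsCurvPair.exists_A_eq`).
* The Bianchi identity recovers `B` from `A` (`IsCurvPair.B_eq`), whence `R = k R₀`.
-/

open TensorProduct

variable {U Q : Type*} [AddCommGroup U] [Module ℂ U] [AddCommGroup Q] [Module ℂ Q]


-- instance ladder to keep typeclass search on the deeply nested types tractable
noncomputable local instance j1a : AddCommGroup (Module.End ℂ (U ⊗[ℂ] Q)) := inferInstance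
noncomputable local instance j1b : Module ℂ (Module.End ℂ (U ⊗[ℂ] Q)) := inferInstance
noncomputable local instance j1c : SMulCommClass ℂ ℂ (Module.End ℂ (U ⊗[ℂ] Q)) := inferInstance
noncomputable local instance j2a : AddCommGroup ((U ⊗[ℂ] Q) →ₗ[ℂ] Module.End ℂ (U ⊗[ℂ] Q)) := inferInstance
noncomputable local instance j2b : Module ℂ ((U ⊗[ℂ] Q) →ₗ[ℂ] Module.End ℂ (U ⊗[ℂ] Q)) := inferInstance
noncomputable local instance j2c : SMulCommClass ℂ ℂ ((U ⊗[ℂ] Q) →ₗ[ℂ] Module.End ℂ (U ⊗[ℂ] Q)) := inferInstance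
noncomputable local instance j3a : AddCommGroup ((U ⊗[ℂ] Q) →ₗ[ℂ] (U ⊗[ℂ] Q) →ₗ[ℂ] Module.End ℂ (U ⊗[ℂ] Q)) := inferInstance
noncomputable local instance j3b : Module ℂ ((U ⊗[ℂ] Q) →ₗ[ℂ] (U ⊗[ℂ] Q) →ₗ[ℂ] Module.End ℂ (U ⊗[ℂ] Q)) := inferInstance

/-- The embedding `gl(U) ⊕ gl(Q) → gl(U ⊗ Q)`,
`(A,B) ↦ A ⊗ id + id ⊗ B`. -/
noncomputable def sumEmb :
    Module.End ℂ U × Module.End ℂ Q →ₗ[ℂ] Module.End ℂ (U ⊗[ℂ] Q) where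
  toFun p := TensorProduct.map p.1 LinearMap.id + TensorProduct.map LinearMap.id p.2
  map_add' p q := by
    simp only [Prod.fst_add, Prod.snd_add, TensorProduct.map_add_left,
      TensorProduct.map_add_right]
    abel
  map_smul' c p := by
    simp only [Prod.smul_fst, Prod.smul_snd, TensorProduct.map_smul_left,
      TensorProduct.map_smul_right, RingHom.id_apply, smul_add]

variable (b : U →ₗ[ℂ] U →ₗ[ℂ] ℂ) (ω : Q →ₗ[ℂ] Q →ₗ[ℂ] ℂ)

/-- `so(U,b) = {A | b(Ax,y) + b(x,Ay) = 0}`. -/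
noncomputable def soU : Submodule ℂ (Module.End ℂ U) where
  carrier := {A | ∀ x y : U, b (A x) y + b x (A y) = 0}
  add_mem' := by
    intro A B hA hB x y
    have h1 := hA x y; have h2 := hB x y
    simp only [LinearMap.add_apply, map_add] at *
    linear_combination h1 + h2
  zero_mem' := by intro x y; simp
  smul_mem' := by
    intro c A hA x y
    have h := hA x y
    simp only [LinearMap.smul_apply, map_smul, smul_eq_mul] at *
    linear_combination c * h

/-- `sp(Q,ω) = {B | ω(Bx,y) + ω(x,By) = 0}`. -/
noncomputable def spQ : Submodule ℂ (Module.End ℂ Q) where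
  carrier := {B | ∀ x y : Q, ω (B x) y + ω x (B y) = 0}
  add_mem' := by
    intro A B hA hB x y
    have h1 := hA x y; have h2 := hB x y
    simp only [LinearMap.add_apply, map_add] at *
    linear_combination h1 + h2
  zero_mem' := by intro x y; simp
  smul_mem' := by
    intro c A hA x y
    have h := hA x y
    simp only [LinearMap.smul_apply, map_smul, smul_eq_mul] at *
    linear_combination c * h

/-- `g = so(U,b) ⊕ sp(Q,ω)` acting on `U ⊗ Q` by
`(A,B)·(x ⊗ y) = Ax ⊗ y + x ⊗ By`. -/
noncomputable def soSpDiag : Submodule ℂ (Module.End ℂ (U ⊗[ℂ] Q)) :=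
  Submodule.map sumEmb ((soU b).prod (spQ ω))

/-- The space `R̄(g)` of symmetric curvature tensors of type
`g = so(U,b) ⊕ sp(Q,ω) ⊂ gl(U ⊗ Q)`. -/
noncomputable def soSpCurv :
    Submodule ℂ ((U ⊗[ℂ] Q) →ₗ[ℂ] (U ⊗[ℂ] Q) →ₗ[ℂ]
      Module.End ℂ (U ⊗[ℂ] Q)) where
  carrier := {R | (∀ x y, R x y = R y x) ∧ (∀ x y, R x y ∈ soSpDiag b ω) ∧
    (∀ x y z, R x y z + R y z x + R z x y = 0)}
  add_mem' := by
    rintro R S ⟨hs1, hm1, hb1⟩ ⟨hs2, hm2, hb2⟩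
    refine ⟨fun x y => by simp [hs1 x y, hs2 x y],
      fun x y => add_mem (hm1 x y) (hm2 x y), fun x y z => ?_⟩
    simp only [LinearMap.add_apply]
    rw [show ∀ a b c d e f : U ⊗[ℂ] Q,
      a + b + (c + d) + (e + f) = (a + c + e) + (b + d + f) from by intros; abel,
      hb1 x y z, hb2 x y z, add_zero]
  zero_mem' := ⟨fun x y => rfl, fun x y => zero_mem _, fun x y z => by simp⟩
  smul_mem' := by
    rintro c R ⟨hs, hm, hb⟩
    refine ⟨fun x y => by simp [hs x y],
      fun x y => Submodule.smul_mem _ _ (hm x y), fun x y z => ?_⟩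
    simp only [LinearMap.smul_apply]
    rw [← smul_add, ← smul_add, hb x y z, smul_zero]

/-! ### Linear algebra -/

section LinearAlgebra

variable {X M : Type*} [AddCommGroup X] [Module ℂ X] [AddCommGroup M] [Module ℂ M]

lemma exists_dual_of_three_le [FiniteDimensional ℂ X] (W : Submodule ℂ X)
    (hW : 3 ≤ Module.finrank ℂ W) (x y : X) :
    ∃ z ∈ W, ∃ f : X →ₗ[ℂ] ℂ, f x = 0 ∧ f y = 0 ∧ f z = 1 := by
  classical
  have hspan : Module.finrank ℂ (Submodule.span ℂ ({x, y} : Set X)) ≤ 2 := by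
    have h := finrank_span_finset_le_card (R := ℂ) ({x, y} : Finset X)
    have h2 : ({x, y} : Finset X).card ≤ 2 := Finset.card_le_two
    simp only [Finset.coe_insert, Finset.coe_singleton] at h
    exact h.trans h2
  have hnot : ¬ W ≤ Submodule.span ℂ ({x, y} : Set X) := fun h => by
    have := Submodule.finrank_mono h
    omega
  obtain ⟨z, hzW, hz⟩ := SetLike.not_le_iff_exists.mp hnot
  obtain ⟨f, hfz, hf⟩ := Submodule.exists_le_ker_of_notMem hz
  refine ⟨z, hzW, (f z)⁻¹ • f, ?_, ?_, ?_⟩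
  · have : f x = 0 := hf (Submodule.subset_span (by simp))
    simp [this]
  · have : f y = 0 := hf (Submodule.subset_span (by simp))
    simp [this]
  · simp [hfz]

/-- A bilinear map vanishing wherever a bilinear form `η` vanishes is a multiple of `η`. -/
lemma bilin_eq_smul_of_vanish (D : X →ₗ[ℂ] X →ₗ[ℂ] M) (η : X →ₗ[ℂ] X →ₗ[ℂ] ℂ)
    (h : ∀ x y, η x y = 0 → D x y = 0) (x₀ y₀ : X) (h₀ : η x₀ y₀ = 1) (x y : X) :
    D x y = η x y • D x₀ y₀ := by
  have h1 : ∀ x y y', η x y' • D x y = η x y • D x y' := fun x y y' => by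
    have := h x (η x y' • y - η x y • y') (by simp; ring)
    simpa [sub_eq_zero] using this
  have h2 : ∀ x x' y, η x' y • D x y = η x y • D x' y := fun x x' y => by
    have := h (η x' y • x - η x y • x') y (by simp; ring)
    simpa [sub_eq_zero] using this
  have key : ∀ y, η x₀ y ≠ 0 → D x y = η x y • D x₀ y₀ := fun y hy => by
    have e1 := h1 x₀ y y₀
    rw [h₀, one_smul] at e1
    have e2 := h2 x x₀ y
    rw [e1, smul_comm] at e2
    exact smul_right_injective M hy e2
  by_cases hy : η x₀ y = 0
  · have e1 := key (y + y₀) (by simp [hy, h₀])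
    have e2 := key y₀ (by simp [h₀])
    rw [map_add, map_add, add_smul, e2] at e1
    exact add_right_cancel e1
  · exact key y hy

lemma exists_eq_one_of_ne_zero (η : X →ₗ[ℂ] X →ₗ[ℂ] ℂ)
    (hnd : ∀ x : X, (∀ y : X, η x y = 0) → x = 0) {x : X} (hx : x ≠ 0) :
    ∃ y, η x y = 1 := by
  have : ∃ y, η x y ≠ 0 := by
    by_contra! h
    exact hx (hnd x h)
  obtain ⟨y, hy⟩ := this
  exact ⟨(η x y)⁻¹ • y, by simp [hy]⟩

lemma alt_swap (η : X →ₗ[ℂ] X →ₗ[ℂ] ℂ) (halt : ∀ x, η x x = 0) (x y : X) :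
    η x y = - η y x := by
  have := halt (x + y)
  simp only [map_add, LinearMap.add_apply, halt] at this
  linear_combination this

/-- In a symplectic space of dimension at least four, a hyperbolic plane has a nonzero orthogonal
complement, which contains another hyperbolic pair. -/
lemma exists_hyperbolic_pair [FiniteDimensional ℂ X] (η : X →ₗ[ℂ] X →ₗ[ℂ] ℂ)
    (hdim : 4 ≤ Module.finrank ℂ X) (halt : ∀ x, η x x = 0)
    (hnd : ∀ x : X, (∀ y : X, η x y = 0) → x = 0) (x y : X) (hxy : η x y ≠ 0) :
    ∃ z w, η x z = 0 ∧ η y z = 0 ∧ η x w = 0 ∧ η y w = 0 ∧ η z w = 1 := by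
  have hker := LinearMap.ker_ne_bot_of_finrank_lt (f := (η x).prod (η y))
    (by simp; omega)
  obtain ⟨z, hz, hz0⟩ := Submodule.exists_mem_ne_zero_of_ne_bot hker
  simp only [LinearMap.mem_ker, LinearMap.prod_apply, Function.prod_apply, Prod.mk_eq_zero] at hz
  obtain ⟨t, ht⟩ := exists_eq_one_of_ne_zero η hnd hz0
  have hyx : η y x = - η x y := alt_swap η halt y x
  have hzx : η z x = 0 := by rw [alt_swap η halt, hz.1, neg_zero]
  have hzy : η z y = 0 := by rw [alt_swap η halt, hz.2, neg_zero]
  refine ⟨z, t - (η x t / η x y) • y + (η y t / η x y) • x, hz.1, hz.2, ?_, ?_, ?_⟩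
  · simp [halt, hxy]
  · simp [halt, hyx, hxy]
  · simp [hzx, hzy, ht]

/-- A skew endomorphism whose image lies in a line is zero. -/
lemma skew_eq_zero_of_line (η : X →ₗ[ℂ] X →ₗ[ℂ] ℂ)
    (hsymm : ∀ x y, η x y = η y x) (hnd : ∀ x : X, (∀ y : X, η x y = 0) → x = 0)
    (F : Module.End ℂ X) (hF : ∀ x y, η (F x) y + η x (F y) = 0) (v : X)
    (h : ∀ x, ∃ c : ℂ, F x = c • v) : F = 0 := by
  by_cases hv : v = 0
  · ext x
    obtain ⟨c, hc⟩ := h x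
    simp [hc, hv]
  have key : ∀ x, η v x ≠ 0 → F x = 0 := fun x hx => by
    obtain ⟨c, hc⟩ := h x
    have := hF x x
    rw [hsymm x, hc] at this
    simp only [map_smul, LinearMap.smul_apply, smul_eq_mul] at this
    have : c = 0 := by
      have h3 : c * η v x = 0 := by linear_combination this / 2
      exact (mul_eq_zero.mp h3).resolve_right hx
    rw [hc, this, zero_smul]
  obtain ⟨t, ht⟩ := exists_eq_one_of_ne_zero η hnd hv
  ext x
  by_cases hx : η v x = 0
  · have e1 := key (x + t) (by simp [hx, ht])
    rw [map_add, key t (by simp [ht]), add_zero] at e1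
    simpa using e1
  · simpa using key x hx

end LinearAlgebra
/-! ### The two components of a curvature tensor -/

variable {b ω}

/-- The components `A : V × V → so(U)` and `B : V × V → sp(Q)` of a curvature tensor
`R = A ⊗ id + id ⊗ B` on `V = U ⊗ Q`, with the Bianchi identity written on pure tensors. -/
structure IsCurvPair (b : U →ₗ[ℂ] U →ₗ[ℂ] ℂ) (ω : Q →ₗ[ℂ] Q →ₗ[ℂ] ℂ)
    (A : (U ⊗[ℂ] Q) →ₗ[ℂ] (U ⊗[ℂ] Q) →ₗ[ℂ] Module.End ℂ U)
    (B : (U ⊗[ℂ] Q) →ₗ[ℂ] (U ⊗[ℂ] Q) →ₗ[ℂ] Module.End ℂ Q) : Prop where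
  skewA : ∀ x y u v, b (A x y u) v + b u (A x y v) = 0
  skewB : ∀ x y p r, ω (B x y p) r + ω p (B x y r) = 0
  bianchi : ∀ (u₁ u₂ u₃ : U) (p₁ p₂ p₃ : Q),
    (A (u₁ ⊗ₜ p₁) (u₂ ⊗ₜ p₂) u₃ ⊗ₜ[ℂ] p₃ + u₃ ⊗ₜ[ℂ] B (u₁ ⊗ₜ p₁) (u₂ ⊗ₜ p₂) p₃) +
    (A (u₂ ⊗ₜ p₂) (u₃ ⊗ₜ p₃) u₁ ⊗ₜ[ℂ] p₁ + u₁ ⊗ₜ[ℂ] B (u₂ ⊗ₜ p₂) (u₃ ⊗ₜ p₃) p₁) +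
    (A (u₃ ⊗ₜ p₃) (u₁ ⊗ₜ p₁) u₂ ⊗ₜ[ℂ] p₂ + u₂ ⊗ₜ[ℂ] B (u₃ ⊗ₜ p₃) (u₁ ⊗ₜ p₁) p₂) = 0

namespace IsCurvPair

variable {A : (U ⊗[ℂ] Q) →ₗ[ℂ] (U ⊗[ℂ] Q) →ₗ[ℂ] Module.End ℂ U}
  {B : (U ⊗[ℂ] Q) →ₗ[ℂ] (U ⊗[ℂ] Q) →ₗ[ℂ] Module.End ℂ Q}

/-- The Bianchi identity contracted with a functional on `Q` that kills `p₁` and `p₂`. -/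
lemma contractQ (h : IsCurvPair b ω A B) (u₁ u₂ u₃ : U) (p₁ p₂ p₃ : Q) (f : Q →ₗ[ℂ] ℂ)
    (h₁ : f p₁ = 0) (h₂ : f p₂ = 0) :
    f p₃ • A (u₁ ⊗ₜ p₁) (u₂ ⊗ₜ p₂) u₃ + f (B (u₁ ⊗ₜ p₁) (u₂ ⊗ₜ p₂) p₃) • u₃
      + f (B (u₂ ⊗ₜ p₂) (u₃ ⊗ₜ p₃) p₁) • u₁ + f (B (u₃ ⊗ₜ p₃) (u₁ ⊗ₜ p₁) p₂) • u₂ = 0 := by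
  have := congrArg (fun t => TensorProduct.rid ℂ U (TensorProduct.map LinearMap.id f t))
    (h.bianchi u₁ u₂ u₃ p₁ p₂ p₃)
  simpa [h₁, h₂] using this

/-- The Bianchi identity contracted with a functional on `U` that kills `u₁` and `u₂`. -/
lemma contractU (h : IsCurvPair b ω A B) (u₁ u₂ u₃ : U) (p₁ p₂ p₃ : Q) (f : U →ₗ[ℂ] ℂ)
    (h₁ : f u₁ = 0) (h₂ : f u₂ = 0) :
    f (A (u₁ ⊗ₜ p₁) (u₂ ⊗ₜ p₂) u₃) • p₃ + f u₃ • B (u₁ ⊗ₜ p₁) (u₂ ⊗ₜ p₂) p₃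
      + f (A (u₂ ⊗ₜ p₂) (u₃ ⊗ₜ p₃) u₁) • p₁ + f (A (u₃ ⊗ₜ p₃) (u₁ ⊗ₜ p₁) u₂) • p₂ = 0 := by
  have := congrArg (fun t => TensorProduct.lid ℂ Q (TensorProduct.map f LinearMap.id t))
    (h.bianchi u₁ u₂ u₃ p₁ p₂ p₃)
  simpa [h₁, h₂] using this

/-- Contracting the Bianchi identity along a hyperbolic pair `(z, w)` orthogonal to `p₁, p₂`, and
again along `(w, z)`, gives `A u = ∓ c u` modulo `u₁, u₂` with the same `c`, because `B` is
skew; adding the two, `c` drops out. -/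
lemma imageA_of_ne_zero (h : IsCurvPair b ω A B) [FiniteDimensional ℂ Q]
    (hdim : 4 ≤ Module.finrank ℂ Q) (halt : ∀ x, ω x x = 0)
    (hnd : ∀ x : Q, (∀ y : Q, ω x y = 0) → x = 0) (u₁ u₂ u : U) (p₁ p₂ : Q)
    (hp : ω p₁ p₂ ≠ 0) :
    A (u₁ ⊗ₜ p₁) (u₂ ⊗ₜ p₂) u ∈ Submodule.span ℂ {u₁, u₂} := by
  obtain ⟨z, w, hz1, hz2, hw1, hw2, hzw⟩ := exists_hyperbolic_pair ω hdim halt hnd p₁ p₂ hp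
  have e1 := h.contractQ u₁ u₂ u p₁ p₂ z (ω w)
    (by rw [alt_swap ω halt, hw1, neg_zero]) (by rw [alt_swap ω halt, hw2, neg_zero])
  have e2 := h.contractQ u₁ u₂ u p₁ p₂ w (ω z)
    (by rw [alt_swap ω halt, hz1, neg_zero]) (by rw [alt_swap ω halt, hz2, neg_zero])
  have hwz : ω w z = -1 := by rw [alt_swap ω halt, hzw]
  have hB : ω w (B (u₁ ⊗ₜ p₁) (u₂ ⊗ₜ p₂) z) = ω z (B (u₁ ⊗ₜ p₁) (u₂ ⊗ₜ p₂) w) := by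
    have := h.skewB (u₁ ⊗ₜ p₁) (u₂ ⊗ₜ p₂) z w
    rw [alt_swap ω halt _ w] at this
    linear_combination -this
  rw [hwz, hB] at e1
  rw [hzw] at e2
  rw [Submodule.mem_span_pair]
  set a := A (u₁ ⊗ₜ p₁) (u₂ ⊗ₜ p₂) u
  refine ⟨(1 / 2 : ℂ) * (ω w (B (u₂ ⊗ₜ p₂) (u ⊗ₜ z) p₁) - ω z (B (u₂ ⊗ₜ p₂) (u ⊗ₜ w) p₁)),
    (1 / 2 : ℂ) * (ω w (B (u ⊗ₜ z) (u₁ ⊗ₜ p₁) p₂) - ω z (B (u ⊗ₜ w) (u₁ ⊗ₜ p₁) p₂)), ?_⟩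
  linear_combination (norm := module) (1 / 2 : ℂ) • e1 - (1 / 2 : ℂ) • e2

lemma imageA (h : IsCurvPair b ω A B) [FiniteDimensional ℂ Q]
    (hdim : 4 ≤ Module.finrank ℂ Q) (halt : ∀ x, ω x x = 0)
    (hnd : ∀ x : Q, (∀ y : Q, ω x y = 0) → x = 0) (u₁ u₂ u : U) (p₁ p₂ : Q) :
    A (u₁ ⊗ₜ p₁) (u₂ ⊗ₜ p₂) u ∈ Submodule.span ℂ {u₁, u₂} := by
  by_cases h0 : p₁ = 0
  · simp [h0]
  by_cases hp : ω p₁ p₂ = 0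
  · -- `p₂` is a difference of two vectors not orthogonal to `p₁`
    obtain ⟨t, ht⟩ := exists_eq_one_of_ne_zero ω hnd h0
    have e1 := h.imageA_of_ne_zero hdim halt hnd u₁ u₂ u p₁ (p₂ + t) (by simp [hp, ht])
    have e2 := h.imageA_of_ne_zero hdim halt hnd u₁ u₂ u p₁ t (by simp [ht])
    have := Submodule.sub_mem _ e1 e2
    simpa [TensorProduct.tmul_add] using this
  · exact h.imageA_of_ne_zero hdim halt hnd u₁ u₂ u p₁ p₂ hp

lemma dual_imageA (h : IsCurvPair b ω A B) [FiniteDimensional ℂ Q]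
    (hdim : 4 ≤ Module.finrank ℂ Q) (halt : ∀ x, ω x x = 0)
    (hnd : ∀ x : Q, (∀ y : Q, ω x y = 0) → x = 0) (u₁ u₂ u : U) (p₁ p₂ : Q)
    (f : U →ₗ[ℂ] ℂ) (h₁ : f u₁ = 0) (h₂ : f u₂ = 0) :
    f (A (u₁ ⊗ₜ p₁) (u₂ ⊗ₜ p₂) u) = 0 := by
  obtain ⟨c, d, hcd⟩ := Submodule.mem_span_pair.mp (h.imageA hdim halt hnd u₁ u₂ u p₁ p₂)
  rw [← hcd]
  simp [h₁, h₂]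

lemma imageB (h : IsCurvPair b ω A B) [FiniteDimensional ℂ Q] [FiniteDimensional ℂ U]
    (hdimU : 3 ≤ Module.finrank ℂ U)
    (hdim : 4 ≤ Module.finrank ℂ Q) (halt : ∀ x, ω x x = 0)
    (hnd : ∀ x : Q, (∀ y : Q, ω x y = 0) → x = 0) (u₁ u₂ : U) (p₁ p₂ p : Q) :
    ∃ c d : ℂ, B (u₁ ⊗ₜ p₁) (u₂ ⊗ₜ p₂) p = c • p₁ + d • p₂ := by
  obtain ⟨u, -, f, h1, h2, h3⟩ := exists_dual_of_three_le (⊤ : Submodule ℂ U)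
    (by simpa using hdimU) u₁ u₂
  have e := h.contractU u₁ u₂ u p₁ p₂ p f h1 h2
  rw [h.dual_imageA hdim halt hnd u₁ u₂ u p₁ p₂ f h1 h2, h3] at e
  refine ⟨- f (A (u₂ ⊗ₜ p₂) (u ⊗ₜ p) u₁), - f (A (u ⊗ₜ p) (u₁ ⊗ₜ p₁) u₂), ?_⟩
  linear_combination (norm := module) e

/-- The component `A` vanishes over orthogonal `p₁, p₂`: choosing `p₃ ⊥ p₁` outside the span of
`p₁, p₂`, the endomorphism `B(u₂ ⊗ p₂, u₃ ⊗ p₃)` kills `p₁`, so the image of `A` lies in the line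
of `u₂`. -/
lemma A_eq_zero (h : IsCurvPair b ω A B) [FiniteDimensional ℂ Q] [FiniteDimensional ℂ U]
    (hdimU : 3 ≤ Module.finrank ℂ U)
    (hdim : 4 ≤ Module.finrank ℂ Q) (halt : ∀ x, ω x x = 0)
    (hnd : ∀ x : Q, (∀ y : Q, ω x y = 0) → x = 0)
    (hbsymm : ∀ x y : U, b x y = b y x)
    (hbnd : ∀ x : U, (∀ y : U, b x y = 0) → x = 0)
    (u₁ u₂ : U) (p₁ p₂ : Q) (hp : ω p₁ p₂ = 0) :
    A (u₁ ⊗ₜ p₁) (u₂ ⊗ₜ p₂) = 0 := by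
  refine skew_eq_zero_of_line b hbsymm hbnd _ (h.skewA _ _) u₂ fun u => ?_
  have hker : 3 ≤ Module.finrank ℂ (LinearMap.ker (ω p₁)) := by
    have e1 := LinearMap.finrank_range_add_finrank_ker (ω p₁)
    have e2 := Submodule.finrank_le (LinearMap.range (ω p₁))
    rw [Module.finrank_self] at e2
    omega
  obtain ⟨p₃, hp3, f, h1, h2, h3⟩ := exists_dual_of_three_le _ hker p₁ p₂
  rw [LinearMap.mem_ker] at hp3
  have e := h.contractQ u₁ u₂ u p₁ p₂ p₃ f h1 h2
  have hB1 : f (B (u₁ ⊗ₜ p₁) (u₂ ⊗ₜ p₂) p₃) = 0 := by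
    obtain ⟨c, d, hcd⟩ := h.imageB hdimU hdim halt hnd u₁ u₂ p₁ p₂ p₃
    simp [hcd, h1, h2]
  have hB2 : B (u₂ ⊗ₜ p₂) (u ⊗ₜ p₃) p₁ = 0 := by
    refine hnd _ fun s => ?_
    have e2 := h.skewB (u₂ ⊗ₜ p₂) (u ⊗ₜ p₃) p₁ s
    obtain ⟨c, d, hcd⟩ := h.imageB hdimU hdim halt hnd u₂ u p₂ p₃ s
    simpa [hcd, hp, hp3] using e2
  rw [h3, hB1, hB2] at e
  refine ⟨- f (B (u ⊗ₜ p₃) (u₁ ⊗ₜ p₁) p₂), ?_⟩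
  rw [map_zero] at e
  linear_combination (norm := module) e

/-- Up to a scalar `k`, the component `A` is `ω(p₁,p₂) (u₁ ∧ u₂)`. -/
lemma exists_A_eq (h : IsCurvPair b ω A B) [FiniteDimensional ℂ Q] [FiniteDimensional ℂ U]
    (hdimU : 3 ≤ Module.finrank ℂ U)
    (hdim : 4 ≤ Module.finrank ℂ Q) (halt : ∀ x, ω x x = 0)
    (hnd : ∀ x : Q, (∀ y : Q, ω x y = 0) → x = 0)
    (hbsymm : ∀ x y : U, b x y = b y x)
    (hbnd : ∀ x : U, (∀ y : U, b x y = 0) → x = 0) :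
    ∃ k : ℂ, ∀ (u₁ u₂ u₃ : U) (p₁ p₂ : Q), A (u₁ ⊗ₜ p₁) (u₂ ⊗ₜ p₂) u₃ =
      (k * ω p₁ p₂) • (b u₁ u₃ • u₂ - b u₂ u₃ • u₁) := by
  have hQ : Nontrivial Q := Module.nontrivial_of_finrank_pos (R := ℂ) (by omega)
  have hU : Nontrivial U := Module.nontrivial_of_finrank_pos (R := ℂ) (by omega)
  obtain ⟨p, hp0⟩ := exists_ne (0 : Q)
  obtain ⟨r, hpr⟩ := exists_eq_one_of_ne_zero ω hnd hp0
  obtain ⟨v₀, hv0⟩ := exists_ne (0 : U)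
  obtain ⟨w₀, hvw⟩ := exists_eq_one_of_ne_zero b hbnd hv0
  obtain ⟨z, w, hz1, hz2, hw1, hw2, hzw⟩ := exists_hyperbolic_pair ω hdim halt hnd p r
    (by simp [hpr])
  -- `β(u₂,u₃) = ω(w, B(u₂ ⊗ r, u₃ ⊗ z) p)`
  let β : U →ₗ[ℂ] U →ₗ[ℂ] ℂ :=
    (B.compl₁₂ ((TensorProduct.mk ℂ U Q).flip r) ((TensorProduct.mk ℂ U Q).flip z)).compr₂
      (ω w ∘ₗ LinearMap.applyₗ p)
  have hβ : ∀ u v, β u v = ω w (B (u ⊗ₜ r) (v ⊗ₜ z) p) := fun u v => rfl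
  have hw1' : ω w p = 0 := by rw [alt_swap ω halt, hw1, neg_zero]
  have hw2' : ω w r = 0 := by rw [alt_swap ω halt, hw2, neg_zero]
  have hwz : ω w z = -1 := by rw [alt_swap ω halt, hzw]
  have hA : ∀ u₁ u₂ u₃, A (u₁ ⊗ₜ p) (u₂ ⊗ₜ r) u₃ =
      β u₂ u₃ • u₁ + ω w (B (u₃ ⊗ₜ z) (u₁ ⊗ₜ p) r) • u₂ := fun u₁ u₂ u₃ => by
    have e := h.contractQ u₁ u₂ u₃ p r z (ω w) hw1' hw2'
    have hB1 : ω w (B (u₁ ⊗ₜ p) (u₂ ⊗ₜ r) z) = 0 := by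
      obtain ⟨c, d, hcd⟩ := h.imageB hdimU hdim halt hnd u₁ u₂ p r z
      simp [hcd, hw1', hw2']
    rw [hwz, hB1, ← hβ] at e
    linear_combination (norm := module) -e
  have hsk : ∀ u₁ u₂ u₃, β u₂ u₃ * b u₁ u₃ + ω w (B (u₃ ⊗ₜ z) (u₁ ⊗ₜ p) r) * b u₂ u₃ = 0 :=
    fun u₁ u₂ u₃ => by
      have e := h.skewA (u₁ ⊗ₜ p) (u₂ ⊗ₜ r) u₃ u₃
      rw [hbsymm u₃, hA] at e
      simp only [map_add, map_smul, LinearMap.add_apply, LinearMap.smul_apply, smul_eq_mul] at e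
      linear_combination e / 2
  have hβ0 : ∀ u v, b u v = 0 → β u v = 0 := fun u v huv => by
    by_cases hv : v = 0
    · simp [hv]
    obtain ⟨t, ht⟩ := exists_eq_one_of_ne_zero b hbnd hv
    have e := hsk t u v
    rw [hbsymm t, ht, huv] at e
    linear_combination e
  have hβb := bilin_eq_smul_of_vanish β b hβ0 v₀ w₀ hvw
  have hγ : ∀ u₁ u₃, ω w (B (u₃ ⊗ₜ z) (u₁ ⊗ₜ p) r) = - β v₀ w₀ * b u₁ u₃ := fun u₁ u₃ => by
    by_cases hv : u₃ = 0
    · simp [hv]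
    obtain ⟨t, ht⟩ := exists_eq_one_of_ne_zero b hbnd hv
    have e := hsk u₁ t u₃
    rw [hβb, hbsymm t, ht, smul_eq_mul] at e
    linear_combination e
  refine ⟨- β v₀ w₀, fun u₁ u₂ u₃ p₁ p₂ => ?_⟩
  let D : Q →ₗ[ℂ] Q →ₗ[ℂ] Module.End ℂ U :=
    A.compl₁₂ (TensorProduct.mk ℂ U Q u₁) (TensorProduct.mk ℂ U Q u₂)
  have hD := bilin_eq_smul_of_vanish D ω
    (fun x y hxy => h.A_eq_zero hdimU hdim halt hnd hbsymm hbnd u₁ u₂ x y hxy) p r hpr p₁ p₂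
  have hD' : A (u₁ ⊗ₜ p₁) (u₂ ⊗ₜ p₂) u₃ = ω p₁ p₂ • A (u₁ ⊗ₜ p) (u₂ ⊗ₜ r) u₃ :=
    LinearMap.congr_fun hD u₃
  rw [hD', hA, hγ, hβb, smul_eq_mul]
  module

/-- The Bianchi identity determines `B` from `A`. -/
lemma B_eq (h : IsCurvPair b ω A B) [FiniteDimensional ℂ U]
    (hdimU : 3 ≤ Module.finrank ℂ U) (hbsymm : ∀ x y : U, b x y = b y x) (k : ℂ)
    (hA : ∀ (u₁ u₂ u₃ : U) (p₁ p₂ : Q), A (u₁ ⊗ₜ p₁) (u₂ ⊗ₜ p₂) u₃ =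
      (k * ω p₁ p₂) • (b u₁ u₃ • u₂ - b u₂ u₃ • u₁)) (u₁ u₂ : U) (p₁ p₂ p₃ : Q) :
    B (u₁ ⊗ₜ p₁) (u₂ ⊗ₜ p₂) p₃ = (k * b u₁ u₂) • (ω p₃ p₁ • p₂ - ω p₂ p₃ • p₁) := by
  obtain ⟨u, -, f, h1, h2, h3⟩ := exists_dual_of_three_le (⊤ : Submodule ℂ U)
    (by simpa using hdimU) u₁ u₂
  have e := h.contractU u₁ u₂ u p₁ p₂ p₃ f h1 h2
  rw [hA, hA, hA] at e
  simp only [map_smul, map_sub, h1, h2, h3, smul_eq_mul, hbsymm u₂ u₁] at e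
  linear_combination (norm := module) e

end IsCurvPair
/-! ### The invariant curvature tensor -/

/-- `u ∧ v : w ↦ b(u,w) v - b(v,w) u`. -/
noncomputable def wedgeMap (b : U →ₗ[ℂ] U →ₗ[ℂ] ℂ) : U →ₗ[ℂ] U →ₗ[ℂ] Module.End ℂ U :=
  LinearMap.mk₂ ℂ (fun u v => (b u).smulRight v - (b v).smulRight u)
    (fun u u' v => by ext; simp; module) (fun c u v => by ext; simp; module)
    (fun u v v' => by ext; simp; module) (fun c u v => by ext; simp; module)

/-- The map `(p, r) ↦ (s ↦ ω(s,p) r - ω(r,s) p)`; for alternating `ω` it is minus the symmetric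
product of `p` and `r`, as an element of `sp(Q,ω)`. -/
noncomputable def symMap (ω : Q →ₗ[ℂ] Q →ₗ[ℂ] ℂ) : Q →ₗ[ℂ] Q →ₗ[ℂ] Module.End ℂ Q :=
  LinearMap.mk₂ ℂ (fun p r => (ω.flip p).smulRight r - (ω r).smulRight p)
    (fun u u' v => by ext; simp; module) (fun c u v => by ext; simp; module)
    (fun u v v' => by ext; simp; module) (fun c u v => by ext; simp; module)

lemma wedgeMap_apply (u v w : U) : wedgeMap b u v w = b u w • v - b v w • u := rfl

lemma symMap_apply (p r s : Q) : symMap ω p r s = ω s p • r - ω r s • p := rfl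

lemma sumEmb_tmul (P : Module.End ℂ U × Module.End ℂ Q) (u : U) (p : Q) :
    sumEmb P (u ⊗ₜ[ℂ] p) = P.1 u ⊗ₜ p + u ⊗ₜ P.2 p := rfl

/-- The generator of the space of curvature tensors:
`R₀(u₁ ⊗ p₁, u₂ ⊗ p₂) = ω(p₁,p₂) (u₁ ∧ u₂) ⊗ id + b(u₁,u₂) id ⊗ symMap(p₁,p₂)`. -/
noncomputable def R₀ (b : U →ₗ[ℂ] U →ₗ[ℂ] ℂ) (ω : Q →ₗ[ℂ] Q →ₗ[ℂ] ℂ) :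
    (U ⊗[ℂ] Q) →ₗ[ℂ] (U ⊗[ℂ] Q) →ₗ[ℂ] Module.End ℂ (U ⊗[ℂ] Q) :=
  (TensorProduct.map₂ (wedgeMap b) ω).compr₂
      (sumEmb ∘ₗ LinearMap.inl ℂ _ _ ∘ₗ (TensorProduct.rid ℂ (Module.End ℂ U)).toLinearMap) +
    (TensorProduct.map₂ b (symMap ω)).compr₂
      (sumEmb ∘ₗ LinearMap.inr ℂ _ _ ∘ₗ (TensorProduct.lid ℂ (Module.End ℂ Q)).toLinearMap)

lemma R₀_tmul (u₁ u₂ : U) (p₁ p₂ : Q) :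
    R₀ b ω (u₁ ⊗ₜ p₁) (u₂ ⊗ₜ p₂) =
      sumEmb (ω p₁ p₂ • wedgeMap b u₁ u₂, b u₁ u₂ • symMap ω p₁ p₂) := by
  have : (ω p₁ p₂ • wedgeMap b u₁ u₂, b u₁ u₂ • symMap ω p₁ p₂) =
      LinearMap.inl ℂ (Module.End ℂ U) (Module.End ℂ Q) (ω p₁ p₂ • wedgeMap b u₁ u₂) +
      LinearMap.inr ℂ (Module.End ℂ U) (Module.End ℂ Q) (b u₁ u₂ • symMap ω p₁ p₂) := by
    simp
  rw [this, map_add]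
  rfl

lemma R₀_tmul_tmul (u₁ u₂ u₃ : U) (p₁ p₂ p₃ : Q) :
    R₀ b ω (u₁ ⊗ₜ p₁) (u₂ ⊗ₜ p₂) (u₃ ⊗ₜ p₃) =
      ω p₁ p₂ • (b u₁ u₃ • (u₂ ⊗ₜ[ℂ] p₃) - b u₂ u₃ • (u₁ ⊗ₜ[ℂ] p₃)) +
      b u₁ u₂ • (ω p₃ p₁ • (u₃ ⊗ₜ[ℂ] p₂) - ω p₂ p₃ • (u₃ ⊗ₜ[ℂ] p₁)) := by
  rw [R₀_tmul, sumEmb_tmul]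
  simp only [LinearMap.smul_apply, wedgeMap_apply, symMap_apply, TensorProduct.tmul_sub,
    TensorProduct.sub_tmul, TensorProduct.tmul_smul, ← TensorProduct.smul_tmul']

lemma R₀_mem (hbsymm : ∀ x y : U, b x y = b y x) (halt : ∀ x, ω x x = 0) :
    R₀ b ω ∈ soSpCurv b ω := by
  refine ⟨fun x y => ?_, fun x y => ?_, fun x y z => ?_⟩
  · induction x with
    | zero => simp
    | add x x' hx hx' => simp [hx, hx']
    | tmul u₁ p₁ =>
      induction y with
      | zero => simp
      | add y y' hy hy' => simp [hy, hy']
      | tmul u₂ p₂ =>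
        refine TensorProduct.ext' fun u p => ?_
        rw [R₀_tmul_tmul, R₀_tmul_tmul, hbsymm u₂ u₁, alt_swap ω halt p₂ p₁,
          alt_swap ω halt p p₁, alt_swap ω halt p p₂]
        module
  · induction x with
    | zero => simp
    | add x x' hx hx' => simpa using add_mem hx hx'
    | tmul u₁ p₁ =>
      induction y with
      | zero => simp
      | add y y' hy hy' => simpa using add_mem hy hy'
      | tmul u₂ p₂ =>
        rw [R₀_tmul]
        refine Submodule.mem_map_of_mem ⟨Submodule.smul_mem _ _ ?_, Submodule.smul_mem _ _ ?_⟩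
        · intro x y
          simp only [wedgeMap_apply, map_sub, map_smul, LinearMap.sub_apply,
            LinearMap.smul_apply, smul_eq_mul, hbsymm x]
          ring
        · intro x y
          simp only [symMap_apply, map_sub, map_smul, LinearMap.sub_apply,
            LinearMap.smul_apply, smul_eq_mul, alt_swap ω halt x, alt_swap ω halt y]
          ring
  · induction x with
    | zero => simp
    | add x x' hx hx' =>
      simp only [map_add, LinearMap.add_apply]
      linear_combination (norm := module) hx + hx'
    | tmul u₁ p₁ =>
      induction y with
      | zero => simp
      | add y y' hy hy' =>
        simp only [map_add, LinearMap.add_apply]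
        linear_combination (norm := module) hy + hy'
      | tmul u₂ p₂ =>
        induction z with
        | zero => simp
        | add z z' hz hz' =>
          simp only [map_add, LinearMap.add_apply]
          linear_combination (norm := module) hz + hz'
        | tmul u₃ p₃ =>
          simp only [R₀_tmul_tmul]
          rw [hbsymm u₂ u₁, hbsymm u₃ u₁, hbsymm u₃ u₂]
          module

lemma R₀_ne_zero [FiniteDimensional ℂ Q] [FiniteDimensional ℂ U]
    (hdimU : 3 ≤ Module.finrank ℂ U) (hdim : 4 ≤ Module.finrank ℂ Q)
    (hbnd : ∀ x : U, (∀ y : U, b x y = 0) → x = 0)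
    (hnd : ∀ x : Q, (∀ y : Q, ω x y = 0) → x = 0) : R₀ b ω ≠ 0 := by
  intro h0
  have hQ : Nontrivial Q := Module.nontrivial_of_finrank_pos (R := ℂ) (by omega)
  have hU : Nontrivial U := Module.nontrivial_of_finrank_pos (R := ℂ) (by omega)
  obtain ⟨p, hp0⟩ := exists_ne (0 : Q)
  obtain ⟨r, hpr⟩ := exists_eq_one_of_ne_zero ω hnd hp0
  obtain ⟨u, hu0⟩ := exists_ne (0 : U)
  obtain ⟨t, hut⟩ := exists_eq_one_of_ne_zero b hbnd hu0
  -- Pair the value at `(u ⊗ p, v ⊗ r)` on `t ⊗ s` with functionals `f`, `g` isolating `v ⊗ s`.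
  obtain ⟨v, -, f, hfu, hft, hfv⟩ := exists_dual_of_three_le (⊤ : Submodule ℂ U)
    (by simpa using hdimU) u t
  obtain ⟨s, -, g, hgp, hgr, hgs⟩ := exists_dual_of_three_le (⊤ : Submodule ℂ Q)
    (by simp; omega) p r
  have e := R₀_tmul_tmul (b := b) (ω := ω) u v t p r s
  rw [h0] at e
  have e' := congrArg (fun x => TensorProduct.lid ℂ ℂ (TensorProduct.map f g x)) e
  simp [hfu, hft, hfv, hgs, hpr, hut] at e'

/-- `R₀` is built from the invariant forms, hence is annihilated by `g`. -/
lemma R₀_invariant (C : Module.End ℂ (U ⊗[ℂ] Q)) (hC : C ∈ soSpDiag b ω) (x y : U ⊗[ℂ] Q) :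
    C * R₀ b ω x y - R₀ b ω x y * C - R₀ b ω (C x) y - R₀ b ω x (C y) = 0 := by
  obtain ⟨⟨a, c⟩, ⟨ha, hc⟩, rfl⟩ := hC
  have ha' : ∀ x y, b (a x) y = - b x (a y) := fun x y => eq_neg_of_add_eq_zero_left (ha x y)
  have hc' : ∀ x y, ω (c x) y = - ω x (c y) := fun x y => eq_neg_of_add_eq_zero_left (hc x y)
  induction x with
  | zero => simp
  | add x x' hx hx' =>
    simp only [map_add, LinearMap.add_apply, mul_add, add_mul]
    linear_combination (norm := module) hx + hx'
  | tmul u₁ p₁ =>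
    induction y with
    | zero => simp
    | add y y' hy hy' =>
      simp only [map_add, mul_add, add_mul]
      linear_combination (norm := module) hy + hy'
    | tmul u₂ p₂ =>
      refine TensorProduct.ext' fun u p => ?_
      simp only [LinearMap.sub_apply, Module.End.mul_apply, LinearMap.zero_apply, sumEmb_tmul,
        map_add, LinearMap.add_apply, R₀_tmul_tmul, map_sub, map_smul, ha', hc']
      module

/-! ### Splitting a curvature tensor into its components -/

/-- `A ⊗ id + id ⊗ B = 0` forces `A` to be a scalar, and a skew scalar endomorphism is zero. -/
lemma sumEmb_injOn [FiniteDimensional ℂ Q] [FiniteDimensional ℂ U]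
    (hdimU : 3 ≤ Module.finrank ℂ U) (hdim : 4 ≤ Module.finrank ℂ Q)
    (hbnd : ∀ x : U, (∀ y : U, b x y = 0) → x = 0)
    (P : Module.End ℂ U × Module.End ℂ Q) (hP : P ∈ (soU b).prod (spQ ω))
    (h0 : sumEmb P = 0) : P = 0 := by
  have hQ : Nontrivial Q := Module.nontrivial_of_finrank_pos (R := ℂ) (by omega)
  have hU : Nontrivial U := Module.nontrivial_of_finrank_pos (R := ℂ) (by omega)
  have h1 : ∀ u p, P.1 u ⊗ₜ[ℂ] p + u ⊗ₜ[ℂ] P.2 p = 0 := fun u p => by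
    rw [← sumEmb_tmul, h0]; rfl
  obtain ⟨p, -, g, -, -, hg⟩ := exists_dual_of_three_le (⊤ : Submodule ℂ Q)
    (by simp; omega) 0 0
  have hA : ∀ u, P.1 u = - g (P.2 p) • u := fun u => by
    have := congrArg (fun t => TensorProduct.rid ℂ U (TensorProduct.map LinearMap.id g t)) (h1 u p)
    simp only [map_add, TensorProduct.map_tmul, TensorProduct.rid_tmul, hg, LinearMap.id_apply,
      map_zero] at this
    linear_combination (norm := module) this
  obtain ⟨u, hu⟩ := exists_ne (0 : U)
  obtain ⟨t, ht⟩ := exists_eq_one_of_ne_zero b hbnd hu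
  have hc : g (P.2 p) = 0 := by
    have := hP.1 u t
    simp only [hA, map_smul, LinearMap.smul_apply, smul_eq_mul, ht] at this
    linear_combination - this / 2
  have hA0 : ∀ u, P.1 u = 0 := fun u => by rw [hA, hc]; simp
  obtain ⟨v, -, f, -, -, hf⟩ := exists_dual_of_three_le (⊤ : Submodule ℂ U)
    (by simpa using hdimU) 0 0
  refine Prod.ext (LinearMap.ext hA0) (LinearMap.ext fun r => ?_)
  have := congrArg (fun t => TensorProduct.lid ℂ Q (TensorProduct.map f LinearMap.id t)) (h1 v r)
  simpa [hA0, hf] using this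

lemma exists_curvPair [FiniteDimensional ℂ Q] [FiniteDimensional ℂ U]
    (hdimU : 3 ≤ Module.finrank ℂ U) (hdim : 4 ≤ Module.finrank ℂ Q)
    (hbnd : ∀ x : U, (∀ y : U, b x y = 0) → x = 0)
    (R : (U ⊗[ℂ] Q) →ₗ[ℂ] (U ⊗[ℂ] Q) →ₗ[ℂ] Module.End ℂ (U ⊗[ℂ] Q))
    (hR : R ∈ soSpCurv b ω) :
    ∃ A B, IsCurvPair b ω A B ∧ ∀ x y, R x y = sumEmb (A x y, B x y) := by
  let S := (soU b).prod (spQ ω)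
  let F : S →ₗ[ℂ] Module.End ℂ (U ⊗[ℂ] Q) := sumEmb ∘ₗ S.subtype
  obtain ⟨G, hG⟩ := LinearMap.exists_leftInverse_of_injective F
    (LinearMap.ker_eq_bot'.mpr fun P h0 =>
      Subtype.ext (sumEmb_injOn hdimU hdim hbnd P.1 P.2 h0))
  let A := R.compr₂ (LinearMap.fst ℂ _ _ ∘ₗ S.subtype ∘ₗ G)
  let B := R.compr₂ (LinearMap.snd ℂ _ _ ∘ₗ S.subtype ∘ₗ G)
  have hAB : ∀ x y, R x y = sumEmb (A x y, B x y) := fun x y => by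
    obtain ⟨P, hP, hPR⟩ := hR.2.1 x y
    have e : G (R x y) = ⟨P, hP⟩ := by
      rw [← hPR]
      exact LinearMap.congr_fun hG ⟨P, hP⟩
    change R x y = sumEmb ((G (R x y)).1.1, (G (R x y)).1.2)
    rw [e, ← hPR]
  refine ⟨A, B, ⟨fun x y => (G (R x y)).2.1, fun x y => (G (R x y)).2.2,
    fun u₁ u₂ u₃ p₁ p₂ p₃ => ?_⟩, hAB⟩
  have := hR.2.2 (u₁ ⊗ₜ p₁) (u₂ ⊗ₜ p₂) (u₃ ⊗ₜ p₃)
  rwa [hAB, hAB, hAB, sumEmb_tmul, sumEmb_tmul, sumEmb_tmul] at this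

lemma exists_smul_R₀ [FiniteDimensional ℂ Q] [FiniteDimensional ℂ U]
    (hdimU : 3 ≤ Module.finrank ℂ U) (hdim : 4 ≤ Module.finrank ℂ Q)
    (halt : ∀ x, ω x x = 0) (hnd : ∀ x : Q, (∀ y : Q, ω x y = 0) → x = 0)
    (hbsymm : ∀ x y : U, b x y = b y x)
    (hbnd : ∀ x : U, (∀ y : U, b x y = 0) → x = 0)
    (R : (U ⊗[ℂ] Q) →ₗ[ℂ] (U ⊗[ℂ] Q) →ₗ[ℂ] Module.End ℂ (U ⊗[ℂ] Q))
    (hR : R ∈ soSpCurv b ω) : ∃ k : ℂ, k • R₀ b ω = R := by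
  obtain ⟨A, B, h, hAB⟩ := exists_curvPair hdimU hdim hbnd R hR
  obtain ⟨k, hA⟩ := h.exists_A_eq hdimU hdim halt hnd hbsymm hbnd
  have hB := h.B_eq hdimU hbsymm k hA
  refine ⟨k, ?_⟩
  refine TensorProduct.ext' fun u₁ p₁ => TensorProduct.ext' fun u₂ p₂ => ?_
  rw [hAB, LinearMap.smul_apply, LinearMap.smul_apply, R₀_tmul, ← map_smul]
  congr 1
  refine Prod.ext (LinearMap.ext fun u => ?_) (LinearMap.ext fun p => ?_)
  · simp [hA, wedgeMap_apply, mul_smul]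
  · simp [hB, symMap_apply, mul_smul]

variable (b ω)

/-- for `g = so(n,ℂ) ⊕ sp(2q,ℂ)` (`n ≥ 3`, `q ≥ 2`) acting on
`ℂⁿ ⊗ ℂ²ᑫ` by `(A,B)·(x ⊗ y) = Ax ⊗ y + x ⊗ By`, the space `R̄(g)` is
one-dimensional, and the natural action of `g` on `R̄(g)`,
`(A·R)(x,y) = [A,R(x,y)] − R(Ax,y) − R(x,Ay)`, is trivial. -/
theorem stmt18 (n q : ℕ) (hn : 3 ≤ n) (hq : 2 ≤ q)
    [FiniteDimensional ℂ U] [FiniteDimensional ℂ Q]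
    (hdimU : Module.finrank ℂ U = n) (hdimQ : Module.finrank ℂ Q = 2 * q)
    (hbsymm : ∀ x y : U, b x y = b y x)
    (hbnd : ∀ x : U, (∀ y : U, b x y = 0) → x = 0)
    (hωalt : ∀ x : Q, ω x x = 0)
    (hωnd : ∀ x : Q, (∀ y : Q, ω x y = 0) → x = 0) :
    Module.finrank ℂ ↥(soSpCurv b ω) = 1 ∧
    (∀ C ∈ soSpDiag b ω, ∀ R ∈ soSpCurv b ω, ∀ x y : U ⊗[ℂ] Q,
      C * R x y - R x y * C - R (C x) y - R x (C y) = 0) := by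
  have hU : 3 ≤ Module.finrank ℂ U := by omega
  have hQ : 4 ≤ Module.finrank ℂ Q := by omega
  have hk := exists_smul_R₀ hU hQ hωalt hωnd hbsymm hbnd
  refine ⟨?_, fun C hC R hR x y => ?_⟩
  · refine finrank_eq_one ⟨R₀ b ω, R₀_mem hbsymm hωalt⟩
      (fun h => R₀_ne_zero hU hQ hbnd hωnd (congrArg Subtype.val h)) fun R => ?_
    obtain ⟨k, hk⟩ := hk R.1 R.2
    exact ⟨k, Subtype.ext hk⟩
  · obtain ⟨k, rfl⟩ := hk R hR
    have := congrArg (k • ·) (R₀_invariant C hC x y)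
    simpa only [smul_sub, smul_zero, LinearMap.smul_apply, mul_smul_comm, smul_mul_assoc]
      using this
end
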